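/- Let CFG(G,O) be a chip firing game on an acyclic directed multigraph G reaching a unique fixed point, with configuration space the finite ULD lattice L, and let κ : M → V(G) × ℕ be the injective map sending each meet-irreducible m to (v, δ_{c'}(v)), where c ⋖ c' is any cover with 𝔪(c,c') = m and v is the vertex fired to pass from c to c'; write κ(m) = (κ(m)⁽¹⁾, κ(m)⁽²⁾). Then for every meet-irreducible m and every a ∈ 𝔘_m, the set {κ(x)⁽¹⁾ : x ∈ M \ M_a} is contained in the set of vertices of G from which there is a directed path (possibly of length zero) to κ(m)⁽¹⁾. -/

import Mathlib

open Classical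

section CFGdefs

variable {V : Type*}

/-- Out-degree of a vertex in a directed multigraph with edge multiplicities `E`. -/
noncomputable def outDeg (E : V → V → ℕ) (v : V) : ℕ := ∑ᶠ u, E v u

/-- A vertex is a sink if all its outgoing edges are loops. -/
def IsSink (E : V → V → ℕ) (v : V) : Prop := outDeg E v = E v v

/-- A vertex is firable in configuration `c`. -/
def Firable (E : V → V → ℕ) (c : V → ℕ) (v : V) : Prop :=
  ¬ IsSink E v ∧ outDeg E v ≤ c v

/-- The result of firing vertex `v` in configuration `c`. -/
noncomputable def fire (E : V → V → ℕ) (c : V → ℕ) (v : V) : V → ℕ :=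
  fun u => if u = v then c v - outDeg E v + E v v else c u + E v u

/-- The configuration obtained by firing a list of vertices in order. -/
noncomputable def fireList (E : V → V → ℕ) : (V → ℕ) → List V → (V → ℕ)
  | c, [] => c
  | c, v :: l => fireList E (fire E c v) l

/-- A list of vertices is a valid firing sequence from `c`. -/
def ValidSeq (E : V → V → ℕ) : (V → ℕ) → List V → Prop
  | _, [] => True
  | c, v :: l => Firable E c v ∧ ValidSeq E (fire E c v) l

/-- `c'` is reachable from `c` by a finite sequence of firings. -/
def Reaches (E : V → V → ℕ) (c c' : V → ℕ) : Prop :=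
  ∃ l : List V, ValidSeq E c l ∧ fireList E c l = c'

/-- A configuration with no firable vertex. -/
def FixedPt (E : V → V → ℕ) (c : V → ℕ) : Prop := ∀ v, ¬ Firable E c v

/-- The chip firing game `CFG(G,O)` reaches a unique fixed point. -/
def ReachesUFP (E : V → V → ℕ) (O : V → ℕ) : Prop :=
  ∃ fp : V → ℕ, Reaches E O fp ∧ FixedPt E fp ∧ ∀ c, Reaches E O c → Reaches E c fp

/-- The game is simple: in every firing sequence from `O` to the fixed point,
each vertex fires at most once. -/
def SimpleCFG (E : V → V → ℕ) (O : V → ℕ) : Prop :=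
  ∀ l : List V, ValidSeq E O l → FixedPt E (fireList E O l) → l.Nodup

/-- Single firing step from `c` to `c'` by firing vertex `v`. -/
def FireStep (E : V → V → ℕ) (c : V → ℕ) (v : V) (c' : V → ℕ) : Prop :=
  Firable E c v ∧ fire E c v = c'

/-- The partial order `L` is order-isomorphic to the configuration space of
`CFG(G,O)` ordered by reachability. -/
def Generates (E : V → V → ℕ) (O : V → ℕ) (L : Type*) [PartialOrder L] : Prop :=
  ∃ f : L ≃ {c : V → ℕ // Reaches E O c},
    ∀ a b : L, a ≤ b ↔ Reaches E (f a).val (f b).val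

/-- The support graph is connected (as an undirected graph). -/
def ConnectedG (E : V → V → ℕ) : Prop :=
  ∀ u v : V, Relation.ReflTransGen (fun a b => 0 < E a b ∨ 0 < E b a) u v

/-- The support graph together with its initial data is an Abelian Sandpile Model. -/
def IsASM (E : V → V → ℕ) : Prop :=
  ConnectedG E ∧ ∃ s : V, IsSink E s ∧ (∀ v, IsSink E v → v = s) ∧
    ∀ v₁ v₂ : V, v₁ ≠ v₂ → v₁ ≠ s → v₂ ≠ s → E v₁ v₂ = E v₂ v₁

/-- The directed multigraph has no directed cycle. -/
def AcyclicG (E : V → V → ℕ) : Prop :=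
  ∀ v : V, ¬ Relation.TransGen (fun a b => 0 < E a b) v v

end CFGdefs

/-- `L` is generated by some chip firing game reaching a unique fixed point. -/
def MemLCFG (L : Type*) [PartialOrder L] : Prop :=
  ∃ (V : Type) (_ : Finite V) (E : V → V → ℕ) (O : V → ℕ),
    ReachesUFP E O ∧ Generates E O L

/-- `L` is generated by some Abelian Sandpile Model reaching a unique fixed point. -/
def MemLASM (L : Type*) [PartialOrder L] : Prop :=
  ∃ (V : Type) (_ : Finite V) (E : V → V → ℕ) (O : V → ℕ),
    IsASM E ∧ ReachesUFP E O ∧ Generates E O L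

section Latticedefs

variable {L : Type*} [Lattice L]

/-- `m` is meet-irreducible: it has exactly one upper cover. -/
def MeetIrred (m : L) : Prop := ∃! y, m ⋖ y

/-- `j` is join-irreducible: it has exactly one lower cover. -/
def JoinIrred (j : L) : Prop := ∃! y, y ⋖ j

/-- The set `M_x \ M_y` of meet-irreducibles above `x` but not above `y`. -/
def MsetDiff (x y : L) : Set L := {m | MeetIrred m ∧ x ≤ m ∧ ¬ y ≤ m}

/-- The set `M \ M_a` of meet-irreducibles not above `a`. -/
def MnotAbove (a : L) : Set L := {m | MeetIrred m ∧ ¬ a ≤ m}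

/-- `x⁺`: the join of all upper covers of `x`. -/
noncomputable def uplus [Fintype L] [OrderBot L] (x : L) : L :=
  Finset.univ.sup (fun y => if x ⋖ y then y else ⊥)

/-- `L` is upper locally distributive: for every `x ≠ ⊤` the interval `[x, x⁺]`
is isomorphic to a Boolean lattice (a hypercube). -/
def IsULD (L : Type*) [Lattice L] [Fintype L] [BoundedOrder L] : Prop :=
  ∀ x : L, x ≠ ⊤ → ∃ n : ℕ, Nonempty (↥(Set.Icc x (uplus x)) ≃o Set (Fin n))

/-- `𝔘_m`: the minimal elements of `{x : ∃ y, x ⋖ y and 𝔪(x,y) = m}`. -/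
def Uset (m : L) : Set L :=
  {x | Minimal (fun z => ∃ y, z ⋖ y ∧ MsetDiff z y = {m}) x}

/-- `𝔏_m`: the maximal elements of `{x : a ≰ x for every a ∈ 𝔘_m}`. -/
def Lset (m : L) : Set L :=
  {x | Maximal (fun z => ∀ a ∈ Uset m, ¬ a ≤ z) x}

/-- `(w, e)` is a (non-negative integer) solution of the system `E(m)`. -/
def SolvesE [OrderBot L] (m : L) (w : ℕ) (e : L → ℕ) : Prop :=
  (Uset m = {(⊥ : L)} → 1 ≤ w) ∧
  (Uset m ≠ {(⊥ : L)} →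
    (∀ a ∈ Lset m, (∑ᶠ x ∈ MnotAbove a, e x) < w) ∧
    (∀ a ∈ Uset m, w ≤ ∑ᶠ x ∈ MnotAbove a, e x))

/-- The system `E(m)` has a non-negative integer solution. -/
def HasSolE [OrderBot L] (m : L) : Prop := ∃ w e, SolvesE m w e

/-- The variable `e_{x,m}` occurs in the system `𝔈(m)`. -/
def VarOccurs [OrderBot L] (x m : L) : Prop :=
  MeetIrred m ∧ Uset m ≠ {(⊥ : L)} ∧ ∃ a ∈ Uset m ∪ Lset m, x ∈ MnotAbove a

/-- `(W, Ee)` is a non-negative integer solution of the system `Ω`. -/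
def SolvesOmega [OrderBot L] (W : L → ℕ) (Ee : L → L → ℕ) : Prop :=
  (∀ m : L, MeetIrred m → SolvesE m (W m) (fun x => Ee x m)) ∧
  (∀ m₁ m₂ : L, m₁ ≠ m₂ → VarOccurs m₁ m₂ → VarOccurs m₂ m₁ → Ee m₁ m₂ = Ee m₂ m₁)

/-- The edge relation of the directed graph `𝒢` on the meet-irreducibles. -/
def Gedge (m₁ m₂ : L) : Prop :=
  MeetIrred m₁ ∧ MeetIrred m₂ ∧ ∃ a ∈ Uset m₂, m₁ ∈ MnotAbove a

end Latticedefs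

/-- The system `Ω` has a non-negative integer solution. -/
def HasSolOmega (L : Type*) [Lattice L] [OrderBot L] : Prop :=
  ∃ W Ee, SolvesOmega (L := L) W Ee

/-- The directed graph `𝒢` on the meet-irreducibles is acyclic. -/
def GAcyclic (L : Type*) [Lattice L] : Prop :=
  ∀ m : L, ¬ Relation.TransGen (Gedge (L := L)) m m

section ChipFiring

variable {V : Type*} {E : V → V → ℕ}

theorem fireList_append (c : V → ℕ) (l₁ l₂ : List V) :
    fireList E c (l₁ ++ l₂) = fireList E (fireList E c l₁) l₂ := by
  induction l₁ generalizing c with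
  | nil => rfl
  | cons v l ih => exact ih _

theorem validSeq_append (c : V → ℕ) (l₁ l₂ : List V) :
    ValidSeq E c (l₁ ++ l₂) ↔ ValidSeq E c l₁ ∧ ValidSeq E (fireList E c l₁) l₂ := by
  induction l₁ generalizing c with
  | nil => simp [ValidSeq, fireList]
  | cons v l ih => simp [ValidSeq, fireList, ih, and_assoc]

/-- Chip balance at a vertex along a valid firing sequence. -/
theorem fireList_apply_add {c : V → ℕ} {l : List V} (h : ValidSeq E c l) (u : V) :
    fireList E c l u + l.count u * outDeg E u = c u + (l.map (E · u)).sum := by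
  induction l generalizing c with
  | nil => simp [fireList]
  | cons v l ih =>
    have h₁ := ih h.2
    have h₂ := h.1.2
    simp only [fireList, List.map_cons, List.sum_cons]
    by_cases huv : u = v
    · subst huv
      rw [List.count_cons_self, add_mul]
      simp only [fire, if_true] at h₁ ⊢
      omega
    · rw [List.count_cons_of_ne (Ne.symm huv)]
      simp only [fire, huv, if_false] at h₁ ⊢
      omega

theorem fireList_eq_of_perm {c : V → ℕ} {l₁ l₂ : List V} (h₁ : ValidSeq E c l₁)
    (h₂ : ValidSeq E c l₂) (h : l₁.Perm l₂) : fireList E c l₁ = fireList E c l₂ := by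
  funext u
  have e₁ := fireList_apply_add h₁ u
  have e₂ := fireList_apply_add h₂ u
  rw [h.count_eq, (h.map _).sum_eq] at e₁
  omega

theorem not_isSink_of_mem {c : V → ℕ} {l : List V} (h : ValidSeq E c l) {u : V} (hu : u ∈ l) :
    ¬ IsSink E u := by
  induction l generalizing c with
  | nil => simp at hu
  | cons v l ih =>
    rcases List.mem_cons.1 hu with rfl | hu
    · exact h.1.1
    · exact ih h.2 hu

theorem AcyclicG.wellFounded [Finite V] (hE : AcyclicG E) :
    WellFounded (Relation.TransGen fun a b => 0 < E a b) :=
  haveI : Std.Irrefl (Relation.TransGen fun a b => 0 < E a b) := ⟨hE⟩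
  Finite.wellFounded_of_trans_of_irrefl _

/-- In an acyclic game, the shot-vector is determined by the endpoints. -/
theorem perm_of_fireList_eq [Finite V] (hE : AcyclicG E) {c : V → ℕ} {l₁ l₂ : List V}
    (h₁ : ValidSeq E c l₁) (h₂ : ValidSeq E c l₂) (h : fireList E c l₁ = fireList E c l₂) :
    l₁.Perm l₂ := by
  have := Fintype.ofFinite V
  have sum_eq (l : List V) (u : V) : (l.map (E · u)).sum = ∑ w, l.count w * E w u := by
    induction l with
    | nil => simp
    | cons v l ih =>
      simp [List.count_cons, add_mul, Finset.sum_add_distrib, ih, add_comm]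
  rw [List.perm_iff_count]
  intro u
  induction u using hE.wellFounded.induction with
  | _ u ih =>
    by_cases hu : IsSink E u
    · rw [List.count_eq_zero_of_not_mem fun hm => not_isSink_of_mem h₁ hm hu,
        List.count_eq_zero_of_not_mem fun hm => not_isSink_of_mem h₂ hm hu]
    · have e₁ := fireList_apply_add h₁ u
      have e₂ := fireList_apply_add h₂ u
      have hs : (l₁.map (E · u)).sum = (l₂.map (E · u)).sum := by
        rw [sum_eq, sum_eq]
        refine Finset.sum_congr rfl fun w _ => ?_
        rcases Nat.eq_zero_or_pos (E w u) with hw | hw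
        · simp [hw]
        · rw [ih w (.single hw)]
      have hpos : 0 < outDeg E u := by
        by_contra h0
        have hl : E u u = 0 := by
          by_contra hne
          exact hE u (.single (Nat.pos_of_ne_zero hne))
        exact hu (by unfold IsSink; omega)
      rw [h, hs] at e₁
      exact Nat.eq_of_mul_eq_mul_right hpos (by omega)

theorem fire_comm {c : V → ℕ} {v w : V} (hv : Firable E c v) (hw : Firable E c w) :
    fire E (fire E c v) w = fire E (fire E c w) v := by
  funext u
  have h₁ := hv.2
  have h₂ := hw.2
  by_cases hvw : v = w
  · rw [hvw]
  · by_cases huv : u = v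
    · subst huv
      simp only [fire, hvw, if_true, if_false]
      omega
    · by_cases huw : u = w
      · subst huw
        simp only [fire, huv, if_true, if_false]
        omega
      · simp only [fire, huv, huw, if_false]
        omega

theorem Firable.fire_of_ne {c : V → ℕ} {v w : V} (hw : Firable E c w) (hvw : w ≠ v) :
    Firable E (fire E c v) w := by
  refine ⟨hw.1, hw.2.trans ?_⟩
  simp [fire, hvw]

theorem Firable.fireList {c : V → ℕ} {v : V} {l : List V} (hv : Firable E c v) (hl : v ∉ l) :
    Firable E (fireList E c l) v := by
  induction l generalizing c with
  | nil => exact hv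
  | cons w l ih =>
    rw [List.mem_cons, not_or] at hl
    exact ih (hv.fire_of_ne hl.1) hl.2

theorem ValidSeq.erase {c : V → ℕ} {v : V} {l : List V} (hv : Firable E c v)
    (h : ValidSeq E c l) : ValidSeq E (fire E c v) (l.erase v) := by
  induction l generalizing c with
  | nil => trivial
  | cons w l ih =>
    by_cases hwv : w = v
    · subst hwv
      simpa using h.2
    · rw [List.erase_cons_tail (by simpa using hwv)]
      refine ⟨h.1.fire_of_ne hwv, ?_⟩
      rw [fire_comm hv h.1]
      exact ih (hv.fire_of_ne (Ne.symm hwv)) h.2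

/-- Strong exchange property of chip firing. -/
theorem ValidSeq.diff {c : V → ℕ} {l₁ l₂ : List V} (h₁ : ValidSeq E c l₁)
    (h₂ : ValidSeq E c l₂) : ValidSeq E (fireList E c l₁) (l₂.diff l₁) := by
  induction l₁ generalizing c l₂ with
  | nil => exact h₂
  | cons v l ih =>
    rw [List.diff_cons]
    exact ih h₁.2 (h₂.erase h₁.1)

/-- If `l₁` uses no vertex more often than `l₂`, its endpoint reaches the endpoint of `l₂`. -/
theorem fireList_diff_eq {c : V → ℕ} {l₁ l₂ : List V} (h₁ : ValidSeq E c l₁)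
    (h₂ : ValidSeq E c l₂) (h : l₁.Subperm l₂) :
    fireList E (fireList E c l₁) (l₂.diff l₁) = fireList E c l₂ := by
  rw [← fireList_append]
  exact fireList_eq_of_perm ((validSeq_append ..).2 ⟨h₁, h₁.diff h₂⟩) h₂
    (List.subperm_append_diff_self_of_count_le
      fun _ _ => List.Subperm.count_le h _)

theorem reaches_of_subperm {c : V → ℕ} {l₁ l₂ : List V} (h₁ : ValidSeq E c l₁)
    (h₂ : ValidSeq E c l₂) (h : l₁.Subperm l₂) :
    Reaches E (fireList E c l₁) (fireList E c l₂) :=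
  ⟨_, h₁.diff h₂, fireList_diff_eq h₁ h₂ h⟩

/-- Keeping only the firings in a predecessor-closed set of vertices preserves validity and the
chips on that set. -/
theorem ValidSeq.filter {P : V → Prop} (hP : ∀ u w, P w → 0 < E u w → P u) {c c' : V → ℕ}
    {l : List V} (hc : ∀ u, P u → c' u = c u) (h : ValidSeq E c l) :
    ValidSeq E c' (l.filter P) ∧
      ∀ u, P u → fireList E c' (l.filter P) u = fireList E c l u := by
  induction l generalizing c c' with
  | nil => exact ⟨trivial, hc⟩
  | cons v l ih =>
    by_cases hv : P v
    · rw [List.filter_cons_of_pos (by simpa using hv)]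
      have := ih (c := fire E c v) (c' := fire E c' v)
        (fun u hu => by simp [fire, hc u hu, hc v hv]) h.2
      exact ⟨⟨⟨h.1.1, by rw [hc v hv]; exact h.1.2⟩, this.1⟩, this.2⟩
    · rw [List.filter_cons_of_neg (by simpa using hv)]
      refine ih (c := fire E c v) (fun u hu => ?_) h.2
      have huv : u ≠ v := fun e => hv (e ▸ hu)
      have hE : E v u = 0 := by
        by_contra h0
        exact hv (hP v u hu (Nat.pos_of_ne_zero h0))
      simp [fire, huv, hE, hc u hu]

theorem Reaches.trans {c d e : V → ℕ} (h₁ : Reaches E c d) (h₂ : Reaches E d e) :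
    Reaches E c e := by
  obtain ⟨l₁, v₁, rfl⟩ := h₁
  obtain ⟨l₂, v₂, rfl⟩ := h₂
  exact ⟨l₁ ++ l₂, (validSeq_append ..).2 ⟨v₁, v₂⟩, fireList_append ..⟩

theorem FireStep.reaches {c d : V → ℕ} {v : V} (h : FireStep E c v d) : Reaches E c d :=
  ⟨[v], ⟨h.1, trivial⟩, h.2⟩

/-- Firing `v` first leads below the end of a valid sequence exactly when `v` occurs in it. -/
theorem FireStep.reaches_iff_mem [Finite V] (hE : AcyclicG E) {c d : V → ℕ} {v : V}
    (h : FireStep E c v d) {l : List V} (hl : ValidSeq E c l) :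
    Reaches E d (fireList E c l) ↔ v ∈ l := by
  obtain ⟨hv, rfl⟩ := h
  constructor
  · rintro ⟨s, hs, he⟩
    have := perm_of_fireList_eq hE (l₁ := v :: s) ⟨hv, hs⟩ hl he
    exact this.subset List.mem_cons_self
  · intro hm
    exact reaches_of_subperm (l₁ := [v]) ⟨hv, trivial⟩ hl (by simpa using hm)

theorem exists_element_of_reaches {O : V → ℕ} {L : Type*}
    {f : L ≃ {c : V → ℕ // Reaches E O c}} (x : L) {c : V → ℕ} (h : Reaches E (f x).val c) :
    ∃ y : L, (f y).val = c :=
  ⟨f.symm ⟨c, (f x).2.trans h⟩, by simp⟩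

end ChipFiring

section ConfigurationLattice

variable {V : Type*} [Finite V] {E : V → V → ℕ} {O : V → ℕ} {L : Type*} [Lattice L]
  {f : L ≃ {c : V → ℕ // Reaches E O c}}

theorem FireStep.covBy (hE : AcyclicG E)
    (hf : ∀ a b : L, a ≤ b ↔ Reaches E (f a).val (f b).val) {x y : L} {v : V}
    (h : FireStep E (f x).val v (f y).val) : x ⋖ y := by
  have key : ∀ z, x ≤ z → z ≤ y → z = x ∨ z = y := by
    intro z hxz hzy
    obtain ⟨l₁, h₁, e₁⟩ := (hf _ _).1 hxz
    obtain ⟨l₂, h₂, e₂⟩ := (hf _ _).1 hzy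
    rw [← e₁] at h₂ e₂
    rw [← fireList_append] at e₂
    have := (perm_of_fireList_eq hE ((validSeq_append ..).2 ⟨h₁, h₂⟩)
      (l₂ := [v]) ⟨h.1, trivial⟩ (e₂.trans h.2.symm)).length_eq
    rcases l₁ with _ | ⟨w, l₁⟩
    · exact .inl (f.injective (Subtype.ext e₁.symm))
    · have : l₂ = [] := by
        apply List.eq_nil_of_length_eq_zero
        simp only [List.length_append, List.length_cons, List.length_nil] at this
        omega
      subst this
      rw [List.append_nil] at e₂
      exact .inr (f.injective (Subtype.ext (e₁.symm.trans e₂)))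
  have hlt : x < y := by
    refine lt_of_le_of_ne ((hf _ _).2 h.reaches) fun e => ?_
    have := (perm_of_fireList_eq hE (l₁ := []) trivial (l₂ := [v]) ⟨h.1, trivial⟩
      ((congrArg (fun z => (f z).val) e).trans h.2.symm)).length_eq
    simp at this
  refine ⟨hlt, fun z h₁ h₂ => ?_⟩
  rcases key z h₁.le h₂.le with e | e
  · exact h₁.ne' e
  · exact h₂.ne e

theorem exists_fireStep_of_covBy (hE : AcyclicG E)
    (hf : ∀ a b : L, a ≤ b ↔ Reaches E (f a).val (f b).val) {x y : L} (h : x ⋖ y) :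
    ∃ v, FireStep E (f x).val v (f y).val := by
  obtain ⟨l, hl, e⟩ := (hf _ _).1 h.le
  rcases l with _ | ⟨v, l⟩
  · exact absurd (f.injective (Subtype.ext e)) h.ne
  · have hs : FireStep E (f x).val v (fire E (f x).val v) := ⟨hl.1, rfl⟩
    obtain ⟨z, hz⟩ := exists_element_of_reaches (f := f) x hs.reaches
    rw [← hz] at hs
    have hzy : z ≤ y := (hf _ _).2 (hz ▸ ⟨l, hl.2, e⟩)
    have hxz := (hs.covBy hE hf).lt
    rw [← hzy.eq_of_not_lt fun hlt => h.2 hxz hlt]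
    exact ⟨v, hs⟩

/-- At most one meet-irreducible separates the two elements of a cover. -/
theorem msetDiff_subsingleton [Finite L] (hE : AcyclicG E)
    (hf : ∀ a b : L, a ≤ b ↔ Reaches E (f a).val (f b).val) {x y : L} {v : V}
    (h : FireStep E (f x).val v (f y).val) : (MsetDiff x y).Subsingleton := by
  rintro m ⟨hm, hxm, hym⟩ m' ⟨hm', hxm', hym'⟩
  obtain ⟨l₁, h₁, e₁⟩ := (hf _ _).1 hxm
  obtain ⟨l₂, h₂, e₂⟩ := (hf _ _).1 hxm'
  have hv₁ : v ∉ l₁ := by rwa [← h.reaches_iff_mem hE h₁, e₁, ← hf]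
  have hv₂ : v ∉ l₂ := by rwa [← h.reaches_iff_mem hE h₂, e₂, ← hf]
  have hl : ValidSeq E (f x).val (l₁ ++ l₂.diff l₁) := (validSeq_append ..).2 ⟨h₁, h₁.diff h₂⟩
  obtain ⟨n, hn⟩ := exists_element_of_reaches (f := f) x ⟨_, hl, rfl⟩
  have hmn : m ≤ n := by
    rw [hf, ← e₁, hn]
    exact reaches_of_subperm h₁ hl (List.sublist_append_left ..).subperm
  have hmn' : m' ≤ n := by
    rw [hf, ← e₂, hn]
    refine reaches_of_subperm h₂ hl (List.subperm_iff_count.2 fun u => ?_)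
    rw [List.count_append, List.count_diff]
    omega
  have hyn : ¬ y ≤ n := by
    rw [hf, hn, h.reaches_iff_mem hE hl, List.mem_append, not_or]
    exact ⟨hv₁, fun hm => hv₂ (List.diff_subset _ _ hm)⟩
  have eq_of_le : ∀ {p : L} {l : List V}, MeetIrred p → ValidSeq E (f x).val l →
      fireList E (f x).val l = (f p).val → v ∉ l → p ≤ n → p = n := by
    intro p l hp hl e hvl hpn
    by_contra hne
    obtain ⟨z, hpz, hzn⟩ := exists_covBy_le_of_lt (lt_of_le_of_ne hpn hne)
    have hfire : Firable E (f p).val v := e ▸ h.1.fireList hvl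
    obtain ⟨q, hq⟩ := exists_element_of_reaches (f := f) p
      (FireStep.reaches (v := v) ⟨hfire, rfl⟩)
    have hpq : p ⋖ q := FireStep.covBy hE hf (v := v) ⟨hfire, hq.symm⟩
    have hqz := hp.unique hpq hpz
    refine hyn (le_trans ?_ (hqz ▸ hzn))
    rw [hf, hq, ← e]
    have := (h.reaches_iff_mem hE (l := l ++ [v])
      ((validSeq_append ..).2 ⟨hl, by rw [e]; exact ⟨hfire, trivial⟩⟩)).2 (by simp)
    rwa [fireList_append] at this
  rw [eq_of_le hm h₁ e₁ hv₁ hmn, eq_of_le hm' h₂ e₂ hv₂ hmn']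

/-- A meet-irreducible above `x` but not above the end of a firing sequence from `x` is
separated by one of its steps. -/
theorem exists_step_of_not_le [Finite L] (hE : AcyclicG E)
    (hf : ∀ a b : L, a ≤ b ↔ Reaches E (f a).val (f b).val) {p : L} (hp : MeetIrred p)
    {x y : L} {l : List V} (hl : ValidSeq E (f x).val l) (e : fireList E (f x).val l = (f y).val)
    (hx : x ≤ p) (hy : ¬ y ≤ p) :
    ∃ c c' : L, ∃ w ∈ l, FireStep E (f c).val w (f c').val ∧ MsetDiff c c' = {p} := by
  induction l generalizing x with
  | nil => exact absurd (f.injective (Subtype.ext e) ▸ hx) hy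
  | cons w l ih =>
    obtain ⟨z, hz⟩ := exists_element_of_reaches (f := f) x
      (FireStep.reaches (v := w) ⟨hl.1, rfl⟩)
    have hs : FireStep E (f x).val w (f z).val := ⟨hl.1, hz.symm⟩
    by_cases hzp : z ≤ p
    · obtain ⟨c, c', w', hw', h⟩ := ih (x := z) (hz ▸ hl.2) (hz ▸ e) hzp
      exact ⟨c, c', w', List.mem_cons_of_mem _ hw', h⟩
    · exact ⟨x, z, w, List.mem_cons_self, hs,
        (msetDiff_subsingleton hE hf hs).eq_singleton_of_mem ⟨hp, hx, hzp⟩⟩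

end ConfigurationLattice

/-- for a CFG on an acyclic directed multigraph reaching a unique fixed
point generating the finite ULD lattice `L`, with `κ : M → V × ℕ` as above: for every
meet-irreducible `m` and every `a ∈ 𝔘_m`, every vertex `κ(x)⁽¹⁾` with `x ∈ M \ M_a`
admits a directed path (possibly of length zero) to `κ(m)⁽¹⁾` in `G`. -/
theorem stmt19 {V : Type*} [Finite V] (E : V → V → ℕ) (O : V → ℕ)
    (hacyc : AcyclicG E) (hUFP : ReachesUFP E O)
    {L : Type*} [Lattice L] [Fintype L] [BoundedOrder L] (hULD : IsULD L)
    (f : L ≃ {c : V → ℕ // Reaches E O c})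
    (hf : ∀ a b : L, a ≤ b ↔ Reaches E (f a).val (f b).val)
    (κ : {m : L // MeetIrred m} → V × ℕ)
    (hκ : ∀ (m : {m : L // MeetIrred m}) (c c' : L) (v : V) (l : List V),
      c ⋖ c' → MsetDiff c c' = {m.val} → FireStep E (f c).val v (f c').val →
      ValidSeq E O l → fireList E O l = (f c').val →
      κ m = (v, l.count v)) :
    ∀ (m : {m : L // MeetIrred m}) (a : L), a ∈ Uset m.val →
      ∀ x : {m : L // MeetIrred m}, ¬ a ≤ x.val →
        Relation.ReflTransGen (fun u v : V => 0 < E u v) (κ x).1 (κ m).1 := by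
  intro m a ha x hax
  obtain ⟨⟨b, hab, hmab⟩, hmin⟩ := ha
  obtain ⟨v, hv⟩ := exists_fireStep_of_covBy hacyc hf hab
  obtain ⟨lb, hlb, eb⟩ := (f b).2
  rw [hκ m a b v lb hab hmab hv hlb eb]
  obtain ⟨o, ho⟩ : ∃ o : L, (f o).val = O := ⟨f.symm ⟨O, [], trivial, rfl⟩, by simp⟩
  obtain ⟨l, hl, el⟩ := (f a).2
  set P : V → Prop := fun u => Relation.ReflTransGen (fun u v : V => 0 < E u v) u v
  have hP : ∀ u w, P w → 0 < E u w → P u := fun u w hw h => .head h hw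
  have hPv : P v := .refl
  obtain ⟨hl', el'⟩ := hl.filter hP (c' := O) fun _ _ => rfl
  obtain ⟨a', ha'⟩ := exists_element_of_reaches (f := f) o (c := fireList E O (l.filter P))
    ⟨_, by rwa [ho], by rw [ho]⟩
  have hfire : Firable E (f a').val v :=
    ⟨hv.1.1, by rw [ha', el' v hPv, el]; exact hv.1.2⟩
  obtain ⟨b', hb'⟩ := exists_element_of_reaches (f := f) a'
    (FireStep.reaches (v := v) ⟨hfire, rfl⟩)
  have hs : FireStep E (f a').val v (f b').val := ⟨hfire, hb'.symm⟩
  have hr := hl'.diff hl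
  have er := fireList_diff_eq hl' hl List.filter_sublist.subperm
  set r := l.diff (l.filter P) with hrdef
  rw [← ha'] at hr er
  rw [el] at er
  have hvr : v ∉ r := by
    rw [← List.count_eq_zero, hrdef, List.count_diff, List.count_filter (by simpa using hPv)]
    omega
  have ha'a : a' ≤ a := (hf _ _).2 ⟨r, hr, er⟩
  have hb'a : ¬ b' ≤ a := by rwa [hf, ← er, hs.reaches_iff_mem hacyc hr]
  have hb'b : b' ≤ b := by
    have := (hs.reaches_iff_mem hacyc (l := r ++ [v])
      ((validSeq_append ..).2 ⟨hr, by rw [er]; exact ⟨hv.1, trivial⟩⟩)).2 (by simp)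
    rw [fireList_append, er] at this
    rw [hf, ← hv.2]
    exact this
  have hmem : m.val ∈ MsetDiff a b := hmab ▸ rfl
  have hb : a ⊔ b' = b :=
    (sup_le hab.le hb'b).eq_of_not_lt fun h => hab.2 (left_lt_sup.2 hb'a) h
  have hma' : MsetDiff a' b' = {m.val} :=
    (msetDiff_subsingleton hacyc hf hs).eq_singleton_of_mem
      ⟨m.2, ha'a.trans hmem.2.1, fun h => hmem.2.2 (hb ▸ sup_le hmem.2.1 h)⟩
  have haa' : a = a' := (hmin ⟨b', hs.covBy hacyc hf, hma'⟩ ha'a).antisymm ha'a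
  have hox : o ≤ x.val := by
    rw [hf, ho]
    exact (f x.val).2
  rw [← ho] at hl'
  obtain ⟨c, c', w, hw, hcc', hx⟩ := exists_step_of_not_le hacyc hf x.2 hl'
    (y := a) (by rw [haa', ha', ho]) hox hax
  obtain ⟨lc, hlc, ec⟩ := (f c').2
  rw [hκ x c c' w lc (hcc'.covBy hacyc hf) hx hcc' hlc ec]
  simpa using (List.mem_filter.1 hw).2
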